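/- Let Σ = {a,b,c} and let A be the architecture with Procs = {p1,p2}, Stacks = Bags = ∅, DS = Queues = {c1,c2}, Writer(c1) = Reader(c2) = p1 and Writer(c2) = Reader(c1) = p2. Then: (i) there exists a sentence Φ of IPDL(A,Σ) (PDL with intersection of path formulas, but without converse and loop) such that L(S) ≠ L_cbm(Φ) for every CPDS S over (A,Σ); and (ii) there exists a sentence Φ' of LCPDL(A,Σ) (PDL with converse and the loop predicate, but without intersection) such that L(S) ≠ L_cbm(Φ') for every CPDS S over (A,Σ). -/

import Mathlib

/-! ### Architectures and concurrent behaviors with matching (CBMs) -/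

/-- The three kinds of data structures. -/
inductive DSKind : Type
  | stack
  | queue
  | bag
deriving DecidableEq

/-- An architecture: a finite set of processes, a finite set of data structures
(each a stack, queue, or bag), with writer and reader processes; stacks are
written and read by the same process. -/
structure Architecture where
  Procs : Type
  DS : Type
  procsFintype : Fintype Procs
  dsFintype : Fintype DS
  procsDecEq : DecidableEq Procs
  dsDecEq : DecidableEq DS
  kind : DS → DSKind
  Writer : DS → Procs
  Reader : DS → Procs
  stack_wr : ∀ d, kind d = DSKind.stack → Writer d = Reader d

attribute [instance] Architecture.procsFintype Architecture.dsFintype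
  Architecture.procsDecEq Architecture.dsDecEq

/-- Potential events: a process together with a (1-based) position. -/
abbrev Architecture.Event (A : Architecture) : Type := A.Procs × ℕ

/-- The data of a CBM: one word per process and one matching relation per
data structure (on potential events). -/
structure PreCBM (A : Architecture) (Alph : Type) where
  word : A.Procs → List Alph
  mrel : A.DS → A.Event → A.Event → Prop

namespace PreCBM

variable {A : Architecture} {Alph : Type}

/-- `(p,i)` is an event iff `1 ≤ i ≤ |w_p|`. -/
def isEvent (M : PreCBM A Alph) (e : A.Event) : Prop :=
  1 ≤ e.2 ∧ e.2 ≤ (M.word e.1).length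

/-- The set of events of `M`. -/
def events (M : PreCBM A Alph) : Set A.Event := {e | M.isEvent e}

/-- The label of event `(p,i)` is the `i`-th letter of `w_p`. -/
def label (M : PreCBM A Alph) (e : A.Event) : Option Alph :=
  (M.word e.1)[e.2 - 1]?

/-- Process-successor relation `(p,i) → (p,i+1)`. -/
def procSucc (M : PreCBM A Alph) (e f : A.Event) : Prop :=
  M.isEvent e ∧ M.isEvent f ∧ f.1 = e.1 ∧ f.2 = e.2 + 1

/-- `e ▷ f` for some data structure. -/
def mat (M : PreCBM A Alph) (e f : A.Event) : Prop := ∃ d, M.mrel d e f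

def step (M : PreCBM A Alph) (e f : A.Event) : Prop := M.procSucc e f ∨ M.mat e f

/-- The causal order `< = (→ ∪ ▷)⁺`. -/
def lt (M : PreCBM A Alph) : A.Event → A.Event → Prop := Relation.TransGen M.step

/-- An event is internal if it is not the endpoint of any matching edge. -/
def isInternal (M : PreCBM A Alph) (e : A.Event) : Prop :=
  ¬ ∃ d f, M.mrel d e f ∨ M.mrel d f e

/-- The CBM axioms. -/
structure IsCBM (M : PreCBM A Alph) : Prop where
  mrel_valid : ∀ d e f, M.mrel d e f →
    M.isEvent e ∧ M.isEvent f ∧ e.1 = A.Writer d ∧ f.1 = A.Reader d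
  disjoint : ∀ d d' e f e' f', M.mrel d e f → M.mrel d' e' f' →
    ¬ (d = d' ∧ e = e' ∧ f = f') → e ≠ e' ∧ e ≠ f' ∧ f ≠ e' ∧ f ≠ f'
  irrefl : ∀ e, ¬ M.lt e e
  lifo : ∀ d, A.kind d = DSKind.stack → ∀ e₁ f₁ e₂ f₂,
    M.mrel d e₁ f₁ → M.mrel d e₂ f₂ → M.lt e₁ e₂ → M.lt e₂ f₁ → M.lt f₂ f₁
  fifo : ∀ d, A.kind d = DSKind.queue → ∀ e₁ f₁ e₂ f₂,
    M.mrel d e₁ f₁ → M.mrel d e₂ f₂ → M.lt e₁ e₂ → M.lt f₁ f₂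

end PreCBM

/-- Concurrent behaviors with matching over `(A, Alph)`. -/
def CBM (A : Architecture) (Alph : Type) : Type := {M : PreCBM A Alph // M.IsCBM}
/-! ### Systems of concurrent processes with data structures (CPDS) -/

/-- A CPDS over an architecture `A` and alphabet `Alph`. -/
structure CPDS (A : Architecture) (Alph : Type) where
  Locs : Type
  Val : Type
  locsFintype : Fintype Locs
  valFintype : Fintype Val
  locsNonempty : Nonempty Locs
  valNonempty : Nonempty Val
  internal : A.Procs → Locs → Alph → Locs → Prop
  write : A.Procs → Locs → Alph → A.DS → Val → Locs → Prop
  read : A.Procs → Locs → Alph → A.DS → Val → Locs → Prop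
  write_writer : ∀ p ℓ a d v ℓ', write p ℓ a d v ℓ' → A.Writer d = p
  read_reader : ∀ p ℓ a d v ℓ', read p ℓ a d v ℓ' → A.Reader d = p
  init : Locs
  finals : Set (A.Procs → Locs)

namespace CPDS

variable {A : Architecture} {Alph : Type}

/-- `ρ⁻(e)`: location before event `e` (`init` if `e` is minimal on its process). -/
def prevLoc (S : CPDS A Alph) (ρ : A.Event → S.Locs) (e : A.Event) : S.Locs :=
  if e.2 ≤ 1 then S.init else ρ (e.1, e.2 - 1)

/-- `ρ` is a run of `S` on `M` (graph semantics). -/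
def IsRun (S : CPDS A Alph) (M : PreCBM A Alph) (ρ : A.Event → S.Locs) : Prop :=
  (∀ e, M.isEvent e → M.isInternal e →
    ∃ a, M.label e = some a ∧ S.internal e.1 (S.prevLoc ρ e) a (ρ e)) ∧
  (∀ d e f, M.mrel d e f → ∃ v a b,
    M.label e = some a ∧ M.label f = some b ∧
    S.write e.1 (S.prevLoc ρ e) a d v (ρ e) ∧
    S.read f.1 (S.prevLoc ρ f) b d v (ρ f))

/-- Location of the last event of process `p` (`init` if it has no event). -/
def lastLoc (S : CPDS A Alph) (M : PreCBM A Alph) (ρ : A.Event → S.Locs)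
    (p : A.Procs) : S.Locs :=
  if (M.word p).length = 0 then S.init else ρ (p, (M.word p).length)

/-- `S` accepts `M`: some run reaching a global final location tuple. -/
def AcceptsPre (S : CPDS A Alph) (M : PreCBM A Alph) : Prop :=
  ∃ ρ : A.Event → S.Locs, S.IsRun M ρ ∧ (fun p => S.lastLoc M ρ p) ∈ S.finals

/-- The graph-semantics language `L(S) ⊆ CBM(A,Alph)`. -/
def lang (S : CPDS A Alph) : Set (CBM A Alph) := {M | S.AcceptsPre M.1}

end CPDS
/-! ### The two-process, two-queue architecture -/

/-- The architecture with processes `p1 = false`, `p2 = true`, queues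
`c1 = false` (from `p1` to `p2`) and `c2 = true` (from `p2` to `p1`). -/
def archQQ : Architecture where
  Procs := Bool
  DS := Bool
  procsFintype := inferInstance
  dsFintype := inferInstance
  procsDecEq := inferInstance
  dsDecEq := inferInstance
  kind := fun _ => DSKind.queue
  Writer := fun d => d
  Reader := fun d => !d
  stack_wr := fun _ h => DSKind.noConfusion h
/-! ### (IC)PDL over CBMs -/

mutual
  /-- State formulas of ICPDL over CBMs. -/
  inductive PdlS (A : Architecture) (Alph : Type) : Type
    | proc (p : A.Procs)
    | letter (a : Alph)
    | or (σ₁ σ₂ : PdlS A Alph)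
    | not (σ : PdlS A Alph)
    | diam (π : PdlP A Alph) (σ : PdlS A Alph)
    | loop (π : PdlP A Alph)
  /-- Path formulas of ICPDL over CBMs. -/
  inductive PdlP (A : Architecture) (Alph : Type) : Type
    | succ
    | mat (d : A.DS)
    | test (σ : PdlS A Alph)
    | plus (π₁ π₂ : PdlP A Alph)
    | comp (π₁ π₂ : PdlP A Alph)
    | star (π : PdlP A Alph)
    | conv (π : PdlP A Alph)
    | inter (π₁ π₂ : PdlP A Alph)
end

/-- Sentences of ICPDL. -/
inductive PdlSentence (A : Architecture) (Alph : Type) : Type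
  | ex (σ : PdlS A Alph)
  | or (Φ₁ Φ₂ : PdlSentence A Alph)
  | not (Φ : PdlSentence A Alph)

section PdlSem

variable {A : Architecture} {Alph : Type}

mutual
  /-- Semantics of state formulas over a CBM. -/
  def pdlSSem (M : PreCBM A Alph) : PdlS A Alph → A.Event → Prop
    | .proc p => fun e => M.isEvent e ∧ e.1 = p
    | .letter a => fun e => M.isEvent e ∧ M.label e = some a
    | .or σ₁ σ₂ => fun e => pdlSSem M σ₁ e ∨ pdlSSem M σ₂ e
    | .not σ => fun e => M.isEvent e ∧ ¬ pdlSSem M σ e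
    | .diam π σ => fun e => ∃ f, pdlPSem M π e f ∧ pdlSSem M σ f
    | .loop π => fun e => pdlPSem M π e e
  /-- Semantics of path formulas over a CBM. -/
  def pdlPSem (M : PreCBM A Alph) : PdlP A Alph → A.Event → A.Event → Prop
    | .succ => fun e f => M.procSucc e f
    | .mat d => fun e f => M.mrel d e f
    | .test σ => fun e f => e = f ∧ pdlSSem M σ e
    | .plus π₁ π₂ => fun e f => pdlPSem M π₁ e f ∨ pdlPSem M π₂ e f
    | .comp π₁ π₂ => fun e f => ∃ g, pdlPSem M π₁ e g ∧ pdlPSem M π₂ g f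
    | .star π => fun e f =>
        (M.isEvent e ∧ e = f) ∨ Relation.TransGen (fun u v => pdlPSem M π u v) e f
    | .conv π => fun e f => pdlPSem M π f e
    | .inter π₁ π₂ => fun e f => pdlPSem M π₁ e f ∧ pdlPSem M π₂ e f
end

/-- Semantics of sentences over a CBM. -/
def pdlSentSem (M : PreCBM A Alph) : PdlSentence A Alph → Prop
  | .ex σ => ∃ e, M.isEvent e ∧ pdlSSem M σ e
  | .or Φ₁ Φ₂ => pdlSentSem M Φ₁ ∨ pdlSentSem M Φ₂
  | .not Φ => ¬ pdlSentSem M Φ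

end PdlSem

/-- `L_cbm(Φ)`: the CBMs satisfying `Φ`. -/
def pdlLang (A : Architecture) (Alph : Type) (Φ : PdlSentence A Alph) :
    Set (CBM A Alph) := {M | pdlSentSem M.1 Φ}

section PdlFrag

variable {A : Architecture} {Alph : Type}

mutual
  /-- No intersection of path formulas (LCPDL and below). -/
  def PdlS.NoInter : PdlS A Alph → Prop
    | .proc _ => True
    | .letter _ => True
    | .or σ₁ σ₂ => σ₁.NoInter ∧ σ₂.NoInter
    | .not σ => σ.NoInter
    | .diam π σ => π.NoInter ∧ σ.NoInter
    | .loop π => π.NoInter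
  def PdlP.NoInter : PdlP A Alph → Prop
    | .succ => True
    | .mat _ => True
    | .test σ => σ.NoInter
    | .plus π₁ π₂ => π₁.NoInter ∧ π₂.NoInter
    | .comp π₁ π₂ => π₁.NoInter ∧ π₂.NoInter
    | .star π => π.NoInter
    | .conv π => π.NoInter
    | .inter _ _ => False
end

mutual
  /-- No converse and no loop (IPDL and below). -/
  def PdlS.NoConvLoop : PdlS A Alph → Prop
    | .proc _ => True
    | .letter _ => True
    | .or σ₁ σ₂ => σ₁.NoConvLoop ∧ σ₂.NoConvLoop
    | .not σ => σ.NoConvLoop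
    | .diam π σ => π.NoConvLoop ∧ σ.NoConvLoop
    | .loop _ => False
  def PdlP.NoConvLoop : PdlP A Alph → Prop
    | .succ => True
    | .mat _ => True
    | .test σ => σ.NoConvLoop
    | .plus π₁ π₂ => π₁.NoConvLoop ∧ π₂.NoConvLoop
    | .comp π₁ π₂ => π₁.NoConvLoop ∧ π₂.NoConvLoop
    | .star π => π.NoConvLoop
    | .conv _ => False
    | .inter π₁ π₂ => π₁.NoConvLoop ∧ π₂.NoConvLoop
end

def PdlSentence.NoInter : PdlSentence A Alph → Prop
  | .ex σ => σ.NoInter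
  | .or Φ₁ Φ₂ => Φ₁.NoInter ∧ Φ₂.NoInter
  | .not Φ => Φ.NoInter

def PdlSentence.NoConvLoop : PdlSentence A Alph → Prop
  | .ex σ => σ.NoConvLoop
  | .or Φ₁ Φ₂ => Φ₁.NoConvLoop ∧ Φ₂.NoConvLoop
  | .not Φ => Φ.NoConvLoop

end PdlFrag

namespace GridProof

def Adm (n m : ℕ) : Prop := 1 ≤ n ∧ m = 8 * (n * n) + 2 * n

def bit (x : ℕ → Bool) (s : ℕ) : Fin 3 := if x s = true then 0 else 1

/-- label of the event at (1-based) position `s`. -/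
def lab (n m : ℕ) (x y : ℕ → Bool) (s : ℕ) : Fin 3 :=
  if s ≤ m then bit x s else if s ≤ m + 2 * n then 2 else bit y (s - (m + 2 * n))

def mk (n m : ℕ) (x y : ℕ → Bool) : PreCBM archQQ (Fin 3) where
  word := fun _ => (List.range (2 * m + 2 * n)).map (fun i => lab n m x y (i + 1))
  mrel := fun d e f => e.1 = archQQ.Writer d ∧ f.1 = archQQ.Reader d ∧ 1 ≤ e.2 ∧ e.2 % 2 = 0 ∧
    f.2 + 1 = e.2 + 2 * n ∧ f.2 ≤ 2 * m + 2 * n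

variable {n m : ℕ} {x y : ℕ → Bool}

theorem isEvent_iff (e : archQQ.Event) :
    (mk n m x y).isEvent e ↔ 1 ≤ e.2 ∧ e.2 ≤ 2 * m + 2 * n := by
  simp [PreCBM.isEvent, mk]

theorem label_eq (e : archQQ.Event) (h : 1 ≤ e.2 ∧ e.2 ≤ 2 * m + 2 * n) :
    (mk n m x y).label e = some (lab n m x y e.2) := by
  have h1 : e.2 - 1 < 2 * m + 2 * n := by omega
  have h2 : e.2 - 1 + 1 = e.2 := by omega
  simp [PreCBM.label, mk, h1, h2]

theorem step_lt (hn : 1 ≤ n) {e f : archQQ.Event} (h : (mk n m x y).step e f) : e.2 < f.2 := by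
  rcases h with h | ⟨d, h⟩
  · have := h.2.2.2; omega
  · have := h.2.2.2.2.1; omega

theorem lt_lt (hn : 1 ≤ n) {e f : archQQ.Event} (h : (mk n m x y).lt e f) : e.2 < f.2 := by
  induction h with
  | single h => exact step_lt hn h
  | tail _ h ih => exact ih.trans (step_lt hn h)

theorem chain (p : archQQ.Procs) (i : ℕ) (hi : 1 ≤ i) (k : ℕ)
    (hk : i + (k + 1) ≤ 2 * m + 2 * n) : (mk n m x y).lt (p, i) (p, i + (k + 1)) := by
  induction k with
  | zero =>
    refine Relation.TransGen.single (Or.inl ⟨?_, ?_, rfl, rfl⟩)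
    · rw [isEvent_iff]; simp; omega
    · rw [isEvent_iff]; simp; omega
  | succ k ih =>
    refine Relation.TransGen.tail (ih (by omega)) (Or.inl ⟨?_, ?_, rfl, ?_⟩)
    · rw [isEvent_iff]; simp; omega
    · rw [isEvent_iff]; simp; omega
    · simp; omega

theorem proc_ne (d : archQQ.DS) : archQQ.Writer d ≠ archQQ.Reader d := by
  cases d <;> simp [archQQ]

theorem writer_inj {d d' : archQQ.DS} (h : archQQ.Writer d = archQQ.Writer d') : d = d' := h

theorem reader_inj {d d' : archQQ.DS} (h : archQQ.Reader d = archQQ.Reader d') : d = d' := by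
  cases d <;> cases d' <;> simp_all [archQQ]

theorem isCBM (hn : 1 ≤ n) : (mk n m x y).IsCBM where
  mrel_valid := by
    rintro d e f ⟨h1, h2, h3, h4, h5, h6⟩
    rw [isEvent_iff, isEvent_iff]
    refine ⟨⟨h3, by omega⟩, ⟨by omega, h6⟩, h1, h2⟩
  disjoint := by
    rintro d d' e f e' f' ⟨h1, h2, h3, h4, h5, h6⟩ ⟨g1, g2, g3, g4, g5, g6⟩ hne
    refine ⟨?_, ?_, ?_, ?_⟩
    · rintro rfl
      have hd : d = d' := writer_inj (h1.symm.trans g1)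
      subst hd
      exact hne ⟨rfl, rfl, Prod.ext (h2.trans g2.symm) (by omega)⟩
    · rintro rfl; omega
    · rintro rfl; omega
    · rintro rfl
      have hd : d = d' := reader_inj (h2.symm.trans g2)
      subst hd
      exact hne ⟨rfl, Prod.ext (h1.trans g1.symm) (by omega), rfl⟩
  irrefl := fun e h => lt_irrefl _ (lt_lt hn h)
  lifo := fun d h => by simp [archQQ] at h
  fifo := by
    rintro d - e f e' f' ⟨h1, h2, h3, h4, h5, h6⟩ ⟨g1, g2, g3, g4, g5, g6⟩ hlt
    have := lt_lt hn hlt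
    obtain ⟨p, i⟩ := f
    obtain ⟨p', i'⟩ := f'
    have hp : p = p' := h2.trans g2.symm
    subst hp
    simp only at *
    obtain ⟨k, rfl⟩ : ∃ k, i' = i + (k + 1) := ⟨i' - i - 1, by omega⟩
    exact chain _ _ (by omega) _ g6

/-! Formulas -/

def pA : PdlP archQQ (Fin 3) :=
  .comp (.plus (.mat (false : Bool)) (.mat (true : Bool))) .succ
def pA2 : PdlP archQQ (Fin 3) := .comp pA pA
def pB2 : PdlP archQQ (Fin 3) := .comp pA2 (.comp .succ .succ)

def phiI : PdlSentence archQQ (Fin 3) :=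
  .not (.ex (.diam (.comp (.test (.letter 0)) (.inter (.star pA2) (.star pB2))) (.letter 1)))

def phiL : PdlSentence archQQ (Fin 3) :=
  .not (.ex (.loop (.comp (.test (.letter 0))
    (.comp (.star pA2) (.comp (.test (.letter 1)) (.conv (.star pB2)))))))

def Bad (M : PreCBM archQQ (Fin 3)) : Prop :=
  ∃ e f, M.isEvent e ∧ M.label e = some 0 ∧ M.isEvent f ∧ M.label f = some 1 ∧
    pdlPSem M (.star pA2) e f ∧ pdlPSem M (.star pB2) e f

theorem phiI_iff (M : PreCBM archQQ (Fin 3)) : pdlSentSem M phiI ↔ ¬ Bad M := by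
  simp only [phiI, pdlSentSem, Bad, pdlSSem]
  refine not_congr ⟨?_, ?_⟩
  · rintro ⟨e, he, f, h, hf, hl⟩
    rw [pdlPSem] at h
    obtain ⟨g, h1, h2⟩ := h
    simp only [pdlPSem.eq_3] at h1; rw [pdlPSem] at h2
    obtain ⟨rfl, h1⟩ := h1
    rw [pdlSSem] at h1
    exact ⟨e, f, he, h1.2, hf, hl, h2.1, h2.2⟩
  · rintro ⟨e, f, he, h1, hf, hl, h2, h3⟩
    refine ⟨e, he, f, ?_, hf, hl⟩
    rw [pdlPSem]
    refine ⟨e, ?_, ?_⟩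
    · rw [pdlPSem, pdlSSem]; exact ⟨rfl, he, h1⟩
    · rw [pdlPSem]; exact ⟨h2, h3⟩

theorem phiL_iff (M : PreCBM archQQ (Fin 3)) : pdlSentSem M phiL ↔ ¬ Bad M := by
  simp only [phiL, pdlSentSem, Bad, pdlSSem]
  refine not_congr ⟨?_, ?_⟩
  · rintro ⟨e, he, h⟩
    rw [pdlPSem] at h
    obtain ⟨g, h1, h2⟩ := h
    simp only [pdlPSem.eq_3] at h1; rw [pdlPSem] at h2
    obtain ⟨rfl, h1⟩ := h1
    obtain ⟨f, h2, h3⟩ := h2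
    rw [pdlPSem] at h3
    obtain ⟨g, h3, h4⟩ := h3
    simp only [pdlPSem.eq_3] at h3; rw [pdlPSem.eq_7] at h4
    obtain ⟨rfl, h3⟩ := h3
    rw [pdlSSem] at h1 h3
    exact ⟨e, f, he, h1.2, h3.1, h3.2, h2, h4⟩
  · rintro ⟨e, f, he, h1, hf, hl, h2, h3⟩
    refine ⟨e, he, ?_⟩
    rw [pdlPSem]
    refine ⟨e, ?_, ?_⟩
    · rw [pdlPSem, pdlSSem]; exact ⟨rfl, he, h1⟩
    · rw [pdlPSem]
      refine ⟨f, h2, ?_⟩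
      rw [pdlPSem]
      refine ⟨f, ?_, ?_⟩
      · rw [pdlPSem, pdlSSem]; exact ⟨rfl, hf, hl⟩
      · rw [pdlPSem]; exact h3

theorem pA_iff (hn : 1 ≤ n) (e f : archQQ.Event) : pdlPSem (mk n m x y) pA e f ↔
    f.1 = archQQ.Reader e.1 ∧ 1 ≤ e.2 ∧ e.2 % 2 = 0 ∧ f.2 = e.2 + 2 * n ∧
      f.2 ≤ 2 * m + 2 * n := by
  simp only [pA, pdlPSem]
  constructor
  · rintro ⟨g, h, -, h2, h3, h4⟩
    rw [isEvent_iff] at h2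
    rcases h with ⟨a1, a2, a3, a4, a5, a6⟩ | ⟨a1, a2, a3, a4, a5, a6⟩
    · refine ⟨?_, a3, a4, by omega, h2.2⟩
      rw [h3, a2, a1]; rfl
    · refine ⟨?_, a3, a4, by omega, h2.2⟩
      rw [h3, a2, a1]; rfl
  · rintro ⟨h1, h2, h3, h4, h5⟩
    refine ⟨(archQQ.Reader e.1, e.2 + 2 * n - 1), ?_, ?_, ?_, h1, ?_⟩
    · obtain ⟨p, i⟩ := e
      cases p
      · left
        refine ⟨rfl, rfl, h2, h3, ?_, ?_⟩ <;> simp at * <;> omega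
      · right
        refine ⟨rfl, rfl, h2, h3, ?_, ?_⟩ <;> simp at * <;> omega
    · rw [isEvent_iff]; simp only; omega
    · rw [isEvent_iff]; omega
    · simp only; omega

theorem rr (p : archQQ.Procs) :
    archQQ.Reader ((archQQ.Reader p : Bool) : archQQ.DS) = p := by
  cases p <;> rfl

theorem pA2_iff (hn : 1 ≤ n) (e f : archQQ.Event) : pdlPSem (mk n m x y) pA2 e f ↔
    f.1 = e.1 ∧ 1 ≤ e.2 ∧ e.2 % 2 = 0 ∧ f.2 = e.2 + 4 * n ∧ f.2 ≤ 2 * m + 2 * n := by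
  rw [pA2, pdlPSem]
  simp only [pA_iff hn]
  constructor
  · rintro ⟨g, ⟨h1, h2, h3, h4, h5⟩, g1, g2, g3, g4, g5⟩
    refine ⟨?_, h2, h3, by omega, g5⟩
    rw [g1, h1]; exact rr _
  · rintro ⟨h1, h2, h3, h4, h5⟩
    refine ⟨(archQQ.Reader e.1, e.2 + 2 * n), ⟨rfl, h2, h3, rfl, ?_⟩, ?_, ?_, ?_, ?_, h5⟩
    · simp only; omega
    · rw [h1]; exact (rr _).symm
    all_goals (simp only; omega)

theorem pB2_iff (hn : 1 ≤ n) (e f : archQQ.Event) : pdlPSem (mk n m x y) pB2 e f ↔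
    f.1 = e.1 ∧ 1 ≤ e.2 ∧ e.2 % 2 = 0 ∧ f.2 = e.2 + (4 * n + 2) ∧ f.2 ≤ 2 * m + 2 * n := by
  rw [pB2, pdlPSem]
  simp only [pA2_iff hn, pdlPSem, PreCBM.procSucc, isEvent_iff]
  constructor
  · rintro ⟨g, ⟨h1, h2, h3, h4, h5⟩, k, ⟨-, -, g3, g4⟩, -, k2, k3, k4⟩
    refine ⟨?_, h2, h3, by omega, k2.2⟩
    rw [k3, g3, h1]
  · rintro ⟨h1, h2, h3, h4, h5⟩
    refine ⟨(e.1, e.2 + 4 * n), ⟨rfl, h2, h3, rfl, ?_⟩, (e.1, e.2 + 4 * n + 1),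
      ⟨?_, ?_, rfl, rfl⟩, ?_, ?_, h1, ?_⟩
    all_goals (try simp only) <;> omega

/-- Star of a step of size `c` -/
theorem star_sound {π : PdlP archQQ (Fin 3)} {c : ℕ} {M : PreCBM archQQ (Fin 3)}
    (h : ∀ e f, pdlPSem M π e f → f.1 = e.1 ∧ f.2 = e.2 + c) {e f : archQQ.Event}
    (hs : pdlPSem M (.star π) e f) : f.1 = e.1 ∧ ∃ a, f.2 = e.2 + c * a := by
  rw [pdlPSem] at hs
  rcases hs with ⟨-, rfl⟩ | hs
  · exact ⟨rfl, 0, by simp⟩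
  · induction hs with
    | single h1 =>
      obtain ⟨h1, h2⟩ := h _ _ h1
      exact ⟨h1, 1, by simp [h2]⟩
    | tail _ h1 ih =>
      obtain ⟨h1, h2⟩ := h _ _ h1
      obtain ⟨h3, a, h4⟩ := ih
      exact ⟨h1.trans h3, a + 1, by rw [h2, h4]; ring⟩

theorem star_complete {π : PdlP archQQ (Fin 3)} {c L : ℕ} (hc : c % 2 = 0)
    {M : PreCBM archQQ (Fin 3)}
    (h : ∀ e f : archQQ.Event, f.1 = e.1 → 1 ≤ e.2 → e.2 % 2 = 0 → f.2 = e.2 + c → f.2 ≤ L →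
      pdlPSem M π e f) (p : archQQ.Procs) (s : ℕ) (h1 : 1 ≤ s) (h2 : s % 2 = 0) (a : ℕ)
    (h3 : s + c * (a + 1) ≤ L) : pdlPSem M (.star π) (p, s) (p, s + c * (a + 1)) := by
  rw [pdlPSem]
  right
  induction a with
  | zero =>
    refine .single (h _ _ rfl h1 h2 ?_ h3)
    simp
  | succ a ih =>
    have e1 : s + c * (a + 1 + 1) = s + c * (a + 1) + c := by ring
    refine .tail (ih (by omega)) (h _ _ rfl ?_ ?_ e1 h3)
    · simp only; omega
    · simp only; rw [Nat.add_mod, Nat.mul_mod, hc, h2]; simp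

theorem arith (hA : Adm n m) {s t a b : ℕ} (h1 : t = s + 4 * n * a) (h2 : t = s + (4 * n + 2) * b)
    (hs : 1 ≤ s) (ht : t ≤ 2 * m + 2 * n) : t = s ∨ t = s + (m + 2 * n) := by
  obtain ⟨hn, rfl⟩ := hA
  have h3 : 2 * n * a = (2 * n + 1) * b := by nlinarith
  have hco : Nat.Coprime (2 * n + 1) (2 * n) := by simp
  have hd : 2 * n + 1 ∣ a := hco.dvd_of_dvd_mul_left ⟨b, h3⟩
  obtain ⟨k, rfl⟩ := hd
  rcases k with _ | _ | k
  · left; simpa using h1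
  · right; rw [h1]; ring
  · exfalso
    have : 4 * n * ((2 * n + 1) * (k + 1 + 1)) =
      16 * (n * n) + 8 * n + 8 * (n * n) * k + 4 * n * k := by ring
    rw [this] at h1
    have := Nat.zero_le (8 * (n * n) * k)
    have := Nat.zero_le (4 * n * k)
    omega

theorem not_bad (hA : Adm n m) : ¬ Bad (mk n m x x) := by
  rintro ⟨e, f, he, hle, hf, hlf, h1, h2⟩
  obtain ⟨-, a, ha⟩ := star_sound (c := 4 * n)
    (fun e f h => by rw [pA2_iff hA.1] at h; exact ⟨h.1, h.2.2.2.1⟩) h1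
  obtain ⟨-, b, hb⟩ := star_sound (c := 4 * n + 2)
    (fun e f h => by rw [pB2_iff hA.1] at h; exact ⟨h.1, h.2.2.2.1⟩) h2
  rw [isEvent_iff] at he hf
  rw [label_eq _ he] at hle
  rw [label_eq _ hf] at hlf
  rcases arith hA ha hb he.1 hf.2 with h | h
  · rw [h, hle] at hlf; simp at hlf
  · have q1 : e.2 ≤ m := by omega
    have q2 : ¬ e.2 + (m + 2 * n) ≤ m := by have := hA.1; omega
    have q3 : ¬ e.2 + (m + 2 * n) ≤ m + 2 * n := by omega
    rw [h] at hlf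
    simp only [lab, q1, q2, q3, if_true, if_false, Nat.add_sub_cancel] at hle hlf
    rw [hle] at hlf; simp at hlf

theorem bad (hA : Adm n m) (s : ℕ) (h1 : 1 ≤ s) (h2 : s % 2 = 0) (h3 : s ≤ m)
    (hx : x s = true) (hy : y s = false) : Bad (mk n m x y) := by
  have hn := hA.1
  have hm := hA.2
  refine ⟨((false : Bool), s), ((false : Bool), s + (m + 2 * n)), ?_, ?_, ?_, ?_, ?_, ?_⟩
  · rw [isEvent_iff]; simp only; omega
  · rw [label_eq]
    · simp [lab, h3, bit, hx]
    · simp only; omega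
  · rw [isEvent_iff]; simp only; omega
  · rw [label_eq]
    · have q2 : ¬ s + (m + 2 * n) ≤ m := by omega
      have q3 : ¬ s + (m + 2 * n) ≤ m + 2 * n := by omega
      simp only [lab, q2, q3, if_false, Nat.add_sub_cancel, bit, hy]
      rfl
    · simp only; omega
  · have q : s + (m + 2 * n) = s + (4 * n) * (2 * n + 1) := by rw [hm]; ring
    rw [q]
    refine star_complete (L := 2 * m + 2 * n) (by omega) ?_ _ _ h1 h2 _ (by omega)
    intro e f a1 a2 a3 a4 a5
    rw [pA2_iff hn]; exact ⟨a1, a2, a3, a4, a5⟩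
  · have q : s + (m + 2 * n) = s + (4 * n + 2) * (2 * n - 1 + 1) := by
      rw [hm, Nat.sub_add_cancel (by omega)]; ring
    rw [q]
    refine star_complete (L := 2 * m + 2 * n) (by omega) ?_ _ _ h1 h2 _ (by omega)
    intro e f a1 a2 a3 a4 a5
    rw [pB2_iff hn]; exact ⟨a1, a2, a3, a4, a5⟩

/-! Cut and paste of runs -/

theorem glue (hn : 1 ≤ n) (hm : 1 ≤ m) (S : CPDS archQQ (Fin 3)) (ρ ρ' : archQQ.Event → S.Locs)
    (h : S.IsRun (mk n m x x) ρ) (h' : S.IsRun (mk n m y y) ρ')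
    (hf' : (fun p => S.lastLoc (mk n m y y) ρ' p) ∈ S.finals)
    (hag : ∀ p s, m < s → s ≤ m + 2 * n → ρ (p, s) = ρ' (p, s)) :
    S.AcceptsPre (mk n m x y) := by
  classical
  let r : archQQ.Event → S.Locs := fun e => if e.2 ≤ m + 2 * n then ρ e else ρ' e
  have r1 : ∀ e : archQQ.Event, e.2 ≤ m + 2 * n → r e = ρ e := fun e he => if_pos he
  have r2 : ∀ e : archQQ.Event, m < e.2 → r e = ρ' e := by
    intro e he
    by_cases h : e.2 ≤ m + 2 * n
    · rw [r1 _ h]; exact hag e.1 e.2 he h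
    · exact if_neg h
  have p1 : ∀ e : archQQ.Event, e.2 ≤ m + 2 * n → S.prevLoc r e = S.prevLoc ρ e := by
    intro e he
    unfold CPDS.prevLoc
    split_ifs
    · rfl
    · exact r1 _ (by simp only; omega)
  have p2 : ∀ e : archQQ.Event, m + 1 < e.2 → S.prevLoc r e = S.prevLoc ρ' e := by
    intro e he
    unfold CPDS.prevLoc
    split_ifs
    · rfl
    · exact r2 _ (by simp only; omega)
  have l1 : ∀ e : archQQ.Event, 1 ≤ e.2 → e.2 ≤ m + 2 * n →
      (mk n m x y).label e = (mk n m x x).label e := by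
    intro e h1 h2
    rw [label_eq _ ⟨h1, by omega⟩, label_eq _ ⟨h1, by omega⟩]
    simp [lab, h2]
  have l2 : ∀ e : archQQ.Event, m < e.2 → e.2 ≤ 2 * m + 2 * n →
      (mk n m x y).label e = (mk n m y y).label e := by
    intro e h1 h2
    rw [label_eq _ ⟨by omega, h2⟩, label_eq _ ⟨by omega, h2⟩]
    have : ¬ e.2 ≤ m := by omega
    simp [lab, this]
  refine ⟨r, ⟨?_, ?_⟩, ?_⟩
  · intro e he hi
    have he' := he
    rw [isEvent_iff] at he'
    by_cases hc : e.2 ≤ m + 2 * n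
    · rw [l1 e he'.1 hc, p1 e hc, r1 e hc]
      exact h.1 e (by rw [isEvent_iff]; exact he') hi
    · rw [l2 e (by omega) he'.2, p2 e (by omega), r2 e (by omega)]
      exact h'.1 e (by rw [isEvent_iff]; exact he') hi
  · intro d e f hd
    obtain ⟨a1, a2, a3, a4, a5, a6⟩ := id hd
    by_cases hc : f.2 ≤ m + 2 * n
    · rw [l1 e a3 (by omega), l1 f (by omega) hc, p1 e (by omega), p1 f hc, r1 e (by omega),
        r1 f hc]
      exact h.2 d e f hd
    · rw [l2 e (by omega) (by omega), l2 f (by omega) a6, p2 e (by omega), p2 f (by omega),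
        r2 e (by omega), r2 f (by omega)]
      exact h'.2 d e f hd
  · convert hf' using 2 with p
    have hl : ∀ z : ℕ → Bool, ((mk n m z y).word p).length = 2 * m + 2 * n := by
      intro z; simp [mk]
    unfold CPDS.lastLoc
    rw [hl, hl, if_neg (by omega), if_neg (by omega)]
    exact r2 _ (by simp only; omega)

def ext (J : ℕ) (x : Fin J → Bool) (s : ℕ) : Bool :=
  if h : s / 2 - 1 < J then x ⟨s / 2 - 1, h⟩ else false

theorem ext_at (J : ℕ) (x : Fin J → Bool) (j : Fin J) : ext J x (2 * j + 2) = x j := by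
  have h : (2 * (j : ℕ) + 2) / 2 - 1 = j := by omega
  simp [ext, h]

theorem main (S : CPDS archQQ (Fin 3)) (Φ : PdlSentence archQQ (Fin 3))
    (hΦ : ∀ M, pdlSentSem M Φ ↔ ¬ Bad M) : S.lang ≠ pdlLang archQQ (Fin 3) Φ := by
  classical
  intro heq
  haveI := S.locsFintype
  haveI := S.locsNonempty
  set n := Fintype.card S.Locs with hndef
  have hn : 1 ≤ n := Fintype.card_pos
  set m := 8 * (n * n) + 2 * n with hm
  have hA : Adm n m := ⟨hn, hm⟩
  have key : ∀ x y, S.AcceptsPre (mk n m x y) ↔ ¬ Bad (mk n m x y) := by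
    intro x y
    rw [← hΦ]
    exact Set.ext_iff.1 heq ⟨mk n m x y, isCBM hn⟩
  have acc : ∀ x, S.AcceptsPre (mk n m x x) := fun x => (key x x).2 (not_bad hA)
  choose ρ hρ hfin using acc
  let J := 4 * n * n
  let F : (Fin J → Bool) → (Bool × Fin (2 * n) → S.Locs) :=
    fun x q => ρ (ext J x) ((q.1 : archQQ.Procs), m + 1 + q.2)
  have hcard : Fintype.card (Bool × Fin (2 * n) → S.Locs) < Fintype.card (Fin J → Bool) := by
    simp only [Fintype.card_fun, Fintype.card_prod, Fintype.card_bool, Fintype.card_fin]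
    rw [← hndef]
    calc n ^ (2 * (2 * n)) < (2 ^ n) ^ (2 * (2 * n)) :=
          Nat.pow_lt_pow_left Nat.lt_two_pow_self (by omega)
      _ = 2 ^ J := by rw [← pow_mul]; congr 1; simp only [J]; ring
  obtain ⟨x, y, hxy, hF⟩ := Fintype.exists_ne_map_eq_of_card_lt F hcard
  have hag : ∀ (p : archQQ.Procs) s, m < s → s ≤ m + 2 * n →
      ρ (ext J x) (p, s) = ρ (ext J y) (p, s) := by
    intro p s h1 h2
    have := congrFun hF ((p : Bool), (⟨s - (m + 1), by omega⟩ : Fin (2 * n)))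
    simp only [F] at this
    have e : m + 1 + (s - (m + 1)) = s := by omega
    rw [e] at this
    exact this
  obtain ⟨j, hj⟩ := Function.ne_iff.1 hxy
  have hjm : 2 * (j : ℕ) + 2 ≤ m := by
    have h1 := j.2
    have : J = 4 * (n * n) := by simp only [J]; ring
    omega
  have hm1 : 1 ≤ m := by omega
  have fin : ∀ x y : Fin J → Bool, x j = true → y j = false →
      (∀ (p : archQQ.Procs) s, m < s → s ≤ m + 2 * n →
        ρ (ext J x) (p, s) = ρ (ext J y) (p, s)) → False := by
    intro x y hx hy hag
    refine (key _ _).1 (glue hn hm1 S _ _ (hρ (ext J x)) (hρ (ext J y)) (hfin (ext J y)) hag) ?_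
    refine bad hA (2 * j + 2) (by omega) (by omega) hjm ?_ ?_
    · rw [ext_at, hx]
    · rw [ext_at, hy]
  cases hx : x j <;> cases hy : y j
  · exact hj (hx.trans hy.symm)
  · exact fin y x hy hx (fun p s a b => (hag p s a b).symm)
  · exact fin x y hx hy hag
  · exact hj (hx.trans hy.symm)

end GridProof

theorem ipdl_lcpdl_not_cpds_definable :
    (∃ Φ : PdlSentence archQQ (Fin 3), Φ.NoConvLoop ∧
      ∀ S : CPDS archQQ (Fin 3), S.lang ≠ pdlLang archQQ (Fin 3) Φ) ∧
    (∃ Φ' : PdlSentence archQQ (Fin 3), Φ'.NoInter ∧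
      ∀ S : CPDS archQQ (Fin 3), S.lang ≠ pdlLang archQQ (Fin 3) Φ') := by
  refine ⟨⟨GridProof.phiI, ?_, fun S => GridProof.main S _ GridProof.phiI_iff⟩,
    ⟨GridProof.phiL, ?_, fun S => GridProof.main S _ GridProof.phiL_iff⟩⟩
  · simp [GridProof.phiI, GridProof.pB2, GridProof.pA2, GridProof.pA, PdlSentence.NoConvLoop,
      PdlS.NoConvLoop, PdlP.NoConvLoop]
  · simp [GridProof.phiL, GridProof.pB2, GridProof.pA2, GridProof.pA, PdlSentence.NoInter,
      PdlS.NoInter, PdlP.NoInter]
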